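/- Let R be a commutative ring, T1 and T2 square matrices over R, and let r, s be relatively prime positive integers. For every positive integer N, S(N, T1^s ⊗ T2^r) = ∑ S(p,T1)·S(q,T2), where the sum runs over all pairs of positive integers (p,q) with lcm(r·p, s·q) = N·r·s (such pairs satisfy p | N·s and q | N·r, so the sum is finite). -/

import Mathlib

open Kronecker

/-- `S(N,T) = ∑_{g ∣ N} μ(g) · Tr(T^{N/g})` for a square matrix `T` over a
commutative ring. -/
def moebiusTraceSum {R : Type*} [CommRing R] {α : Type*} [Fintype α]
    [DecidableEq α] (T : Matrix α α R) (N : ℕ) : R :=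
  ∑ g ∈ N.divisors, (ArithmeticFunction.moebius g) • Matrix.trace (T ^ (N / g))

theorem moebiusTraceSum_eq_iff {R : Type*} [CommRing R] {α : Type*} [Fintype α]
    [DecidableEq α] (T : Matrix α α R) (f : ℕ → R) :
    (∀ N > 0, ∑ d ∈ N.divisors, f d = Matrix.trace (T ^ N)) ↔
      ∀ N > 0, moebiusTraceSum T N = f N := by
  rw [ArithmeticFunction.sum_eq_iff_sum_smul_moebius_eq]
  simp only [moebiusTraceSum, Nat.sum_divisorsAntidiagonal
    (fun a b => ArithmeticFunction.moebius a • Matrix.trace (T ^ b))]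

theorem sum_divisors_moebiusTraceSum {R : Type*} [CommRing R] {α : Type*} [Fintype α]
    [DecidableEq α] (T : Matrix α α R) {N : ℕ} (hN : 0 < N) :
    ∑ d ∈ N.divisors, moebiusTraceSum T d = Matrix.trace (T ^ N) :=
  (moebiusTraceSum_eq_iff T (moebiusTraceSum T)).2 (fun _ _ => rfl) N hN

theorem kronecker_pow {R : Type*} [CommRing R] {α β : Type*} [Fintype α] [DecidableEq α]
    [Fintype β] [DecidableEq β] (A : Matrix α α R) (B : Matrix β β R) (N : ℕ) :
    (A ⊗ₖ B) ^ N = (A ^ N) ⊗ₖ (B ^ N) := by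
  induction N with
  | zero => simp
  | succ k ih => rw [pow_succ, ih, pow_succ, pow_succ, Matrix.mul_kronecker_mul]

/-- For coprime `r` and `s`, the pairs `(p, q)` with `p ∣ N * s` and `q ∣ N * r` are partitioned
according to the divisor `d` of `N` with `lcm (r * p) (s * q) = d * r * s`. -/
theorem sum_divisors_sum_filter_lcm {M : Type*} [AddCommMonoid M] {r s N : ℕ} (hr : 0 < r)
    (hs : 0 < s) (hrs : Nat.Coprime r s) (hN : 0 < N) (f : ℕ × ℕ → M) :
    ∑ d ∈ N.divisors, ∑ p ∈ ((d * s).divisors ×ˢ (d * r).divisors).filter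
        (fun p => Nat.lcm (r * p.1) (s * p.2) = d * r * s), f p =
      ∑ p ∈ (N * s).divisors ×ˢ (N * r).divisors, f p := by
  have hrs0 : 0 < r * s := Nat.mul_pos hr hs
  have lcm_dvd : ∀ p q, p ∣ N * s → q ∣ N * r → Nat.lcm (r * p) (s * q) ∣ r * s * N := by
    intro p q hp hq
    refine Nat.lcm_dvd ?_ ?_
    · rw [mul_assoc, mul_comm s]
      exact mul_dvd_mul_left r hp
    · rw [mul_comm r, mul_assoc, mul_comm r]
      exact mul_dvd_mul_left s hq
  have dvd_lcm : ∀ p q, r * s ∣ Nat.lcm (r * p) (s * q) := fun p q =>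
    hrs.mul_dvd_of_dvd_of_dvd ((Dvd.intro _ rfl).trans (Nat.dvd_lcm_left _ _))
      ((Dvd.intro _ rfl).trans (Nat.dvd_lcm_right _ _))
  rw [← Finset.sum_fiberwise_of_maps_to (t := N.divisors)
    (g := fun p : ℕ × ℕ => Nat.lcm (r * p.1) (s * p.2) / (r * s))]
  · refine Finset.sum_congr rfl fun d hd => Finset.sum_congr ?_ fun _ _ => rfl
    have hdN := Nat.dvd_of_mem_divisors hd
    have hd0 := Nat.pos_of_mem_divisors hd
    ext ⟨p, q⟩
    have key : Nat.lcm (r * p) (s * q) / (r * s) = d ↔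
        Nat.lcm (r * p) (s * q) = d * r * s := by
      rw [Nat.div_eq_iff_eq_mul_left hrs0 (dvd_lcm p q), mul_assoc]
    simp only [Finset.mem_filter, Finset.mem_product, Nat.mem_divisors, key]
    refine and_congr_left fun h => ?_
    have hp : p ∣ d * s := by
      refine Nat.dvd_of_mul_dvd_mul_left hr ((Nat.dvd_lcm_left _ (s * q)).trans ?_)
      rw [h, mul_comm d, mul_assoc]
    have hq : q ∣ d * r := by
      refine Nat.dvd_of_mul_dvd_mul_left hs ((Nat.dvd_lcm_right (r * p) _).trans ?_)
      rw [h, mul_comm s]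
    simp [hp, hq, hp.trans (mul_dvd_mul_right hdN s), hq.trans (mul_dvd_mul_right hdN r),
      hr.ne', hs.ne', hN.ne', hd0.ne']
  · rintro ⟨p, q⟩ h
    simp only [Finset.mem_product, Nat.mem_divisors] at h
    refine Nat.mem_divisors.2 ⟨Nat.dvd_of_mul_dvd_mul_left hrs0 ?_, hN.ne'⟩
    rw [Nat.mul_div_cancel' (dvd_lcm p q)]
    exact lcm_dvd p q h.1.1 h.2.1

theorem metropolis_rota_relation_powers
    {R : Type*} [CommRing R] (m n : ℕ)
    (T1 : Matrix (Fin m) (Fin m) R) (T2 : Matrix (Fin n) (Fin n) R)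
    (r s : ℕ) (hr : 0 < r) (hs : 0 < s) (hrs : Nat.Coprime r s)
    (N : ℕ) (hN : 0 < N) :
    moebiusTraceSum ((T1 ^ s) ⊗ₖ (T2 ^ r)) N =
      ∑ p ∈ ((N * s).divisors ×ˢ (N * r).divisors).filter
          (fun p => Nat.lcm (r * p.1) (s * p.2) = N * r * s),
        moebiusTraceSum T1 p.1 * moebiusTraceSum T2 p.2 := by
  revert N
  refine (moebiusTraceSum_eq_iff _ (fun N =>
    ∑ p ∈ ((N * s).divisors ×ˢ (N * r).divisors).filter
      (fun p => Nat.lcm (r * p.1) (s * p.2) = N * r * s),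
        moebiusTraceSum T1 p.1 * moebiusTraceSum T2 p.2)).1 fun N hN => ?_
  rw [sum_divisors_sum_filter_lcm hr hs hrs hN
      (fun p => moebiusTraceSum T1 p.1 * moebiusTraceSum T2 p.2),
    Finset.sum_product, ← Finset.sum_mul_sum,
    sum_divisors_moebiusTraceSum T1 (Nat.mul_pos hN hs),
    sum_divisors_moebiusTraceSum T2 (Nat.mul_pos hN hr),
    kronecker_pow, Matrix.trace_kronecker, ← pow_mul, ← pow_mul, mul_comm s, mul_comm r]
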